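/- Plain-complexity characterization of 2-randomness (Nies–Stephan–Terwijn; Miller): A ∈ 2^ω is 2-random (i.e. Martin-Löf random relative to ∅') if and only if A is infinitely often C-incompressible, i.e. there is some c ∈ ℕ such that C(A↾n) ≥ n − c for infinitely many n. -/

import Mathlib

open scoped ENNReal NNReal Classical

namespace AR

/-- Elements of Cantor space `2^ω`: infinite binary sequences. -/
abbrev Seq := ℕ → Bool

/-- Finite binary strings `2^{<ω}`. -/
abbrev Str := List Bool

/-- The first `n` bits of a sequence `A`, as a finite string (`A↾n`). -/
def pre (A : Seq) (n : ℕ) : Str := List.ofFn fun i : Fin n => A i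

/-- The basic clopen cylinder `[σ]` of all sequences extending `σ`. -/
def cyl (σ : Str) : Set Seq := {A | pre A σ.length = σ}

/-- A measure on Cantor space is *fair-coin* if every cylinder `[σ]` has measure
`2^{-|σ|}`; this uniquely characterizes the usual product measure `μ` on `2^ω`. -/
def FairCoin (μ : MeasureTheory.Measure Seq) : Prop :=
  ∀ σ : Str, μ (cyl σ) = (2 : ℝ≥0∞)⁻¹ ^ σ.length

/-- A machine is a partial computable function `2^{<ω} ⇀ 2^{<ω}`. -/
def IsMachine (M : Str →. Str) : Prop := Partrec M

/-- Kolmogorov complexity of `τ` relative to the machine `M`: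
`C_M(τ) = min{|σ| : M(σ)↓ = τ}`, with value `∞` if no such `σ` exists. -/
noncomputable def Cplx (M : Str →. Str) (τ : Str) : ℕ∞ :=
  sInf ((fun σ : Str => (σ.length : ℕ∞)) '' {σ | τ ∈ M σ})

/-- A universal machine: a machine simulating every machine up to an additive
constant.  `Cplx U` for universal `U` is plain Kolmogorov complexity `C`. -/
def UniversalMachine (U : Str →. Str) : Prop :=
  IsMachine U ∧ ∀ M : Str →. Str, IsMachine M → ∃ c : ℕ, ∀ τ, Cplx U τ ≤ Cplx M τ + c

/-- A set of strings is prefix-free if none of its elements is a proper initial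
segment of another. -/
def PrefixFree (S : Set Str) : Prop :=
  ∀ σ ∈ S, ∀ τ ∈ S, σ <+: τ → σ = τ

/-- A prefix-free machine: a machine whose domain is prefix-free. -/
def PrefixFreeMachine (M : Str →. Str) : Prop :=
  IsMachine M ∧ PrefixFree {σ | (M σ).Dom}

/-- A universal prefix-free machine.  `Cplx U` for such `U` is prefix-free
Kolmogorov complexity `K`. -/
def UniversalPFMachine (U : Str →. Str) : Prop :=
  PrefixFreeMachine U ∧
    ∀ M : Str →. Str, PrefixFreeMachine M → ∃ c : ℕ, ∀ τ, Cplx U τ ≤ Cplx M τ + c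

/-- A c.e. (recursively enumerable) predicate. -/
def CEPred {α} [Primcodable α] (p : α → Prop) : Prop :=
  Partrec fun a => Part.assert (p a) fun _ => Part.some ()

/-- A Martin-Löf test: a sequence of uniformly Σ⁰₁ classes `U i`, given by a single
c.e. set `W` of pairs, with `μ (U i) ≤ 2^{-i}`. -/
def MLTest (μ : MeasureTheory.Measure Seq) (U : ℕ → Set Seq) : Prop :=
  ∃ W : Set (ℕ × Str), CEPred (· ∈ W) ∧
    (∀ i, U i = ⋃ σ ∈ {σ : Str | (i, σ) ∈ W}, cyl σ) ∧
    ∀ i, μ (U i) ≤ (2 : ℝ≥0∞)⁻¹ ^ i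

/-- `A` is Martin-Löf random if it passes every Martin-Löf test. -/
def MLRandom (μ : MeasureTheory.Measure Seq) (A : Seq) : Prop :=
  ∀ U : ℕ → Set Seq, MLTest μ U → A ∉ ⋂ i, U i

/-- Oracle partial recursion: `RecIn O f` means that the partial function
`f : ℕ ⇀ ℕ` is partial recursive relative to the oracle `O`
(Mathlib's `Nat.RecursiveIn`). -/
inductive RecIn (O : ℕ →. ℕ) : (ℕ →. ℕ) → Prop
  | zero : RecIn O (pure 0)
  | succ : RecIn O Nat.succ
  | left : RecIn O ↑fun n : ℕ => n.unpair.1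
  | right : RecIn O ↑fun n : ℕ => n.unpair.2
  | oracle : RecIn O O
  | pair {f g} : RecIn O f → RecIn O g → RecIn O fun n => Nat.pair <$> f n <*> g n
  | comp {f g} : RecIn O f → RecIn O g → RecIn O fun n => g n >>= f
  | prec {f g} : RecIn O f → RecIn O g → RecIn O (Nat.unpaired fun a n =>
      n.rec (f a) fun y IH => do let i ← IH; g (Nat.pair a (Nat.pair y i)))
  | rfind {f} : RecIn O f →
      RecIn O fun a => Nat.rfind fun n => (fun m => m = 0) <$> f (Nat.pair a n)

/-- The characteristic-function oracle associated to a sequence `A ∈ 2^ω`. -/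
def oracleOf (A : Seq) : ℕ →. ℕ := fun n => Part.some (cond (A n) 1 0)

/-- The characteristic-function oracle associated to a set of naturals. -/
noncomputable def oracleOfSet (S : Set ℕ) : ℕ →. ℕ :=
  fun n => Part.some (if n ∈ S then 1 else 0)

/-- Relative partial computability for partial functions between coded types. -/
def PartrecIn (O : ℕ →. ℕ) {α σ} [Primcodable α] [Primcodable σ] (f : α →. σ) : Prop :=
  RecIn O fun n =>
    Part.bind (Encodable.decode (α := α) n) fun a => (f a).map Encodable.encode

/-- A predicate is c.e. relative to the oracle `O`. -/
def CEPredIn (O : ℕ →. ℕ) {α} [Primcodable α] (p : α → Prop) : Prop :=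
  PartrecIn O fun a => Part.assert (p a) fun _ => Part.some ()

/-- Turing reducibility between oracles: `f` is recursive in `g`. -/
def TuringLE (f g : ℕ →. ℕ) : Prop := RecIn g f

/-- Turing reducibility `B ≤_T A` between sequences. -/
def SeqTuringLE (B A : Seq) : Prop := TuringLE (oracleOf B) (oracleOf A)

/-- The `e`-th partial computable function `φ_e`, via Mathlib's standard
enumeration of codes for the partial recursive functions. -/
def phi (e : ℕ) : ℕ →. ℕ := (Denumerable.ofNat Nat.Partrec.Code e).eval

/-- The halting problem `∅' = {e : φ_e(e)↓}`. -/
def haltingSet : Set ℕ := {e | (phi e e).Dom}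

/-- A Martin-Löf test relative to the oracle `O`. -/
def MLTestIn (O : ℕ →. ℕ) (μ : MeasureTheory.Measure Seq) (U : ℕ → Set Seq) : Prop :=
  ∃ W : Set (ℕ × Str), CEPredIn O (· ∈ W) ∧
    (∀ i, U i = ⋃ σ ∈ {σ : Str | (i, σ) ∈ W}, cyl σ) ∧
    ∀ i, μ (U i) ≤ (2 : ℝ≥0∞)⁻¹ ^ i

/-- Martin-Löf randomness relative to the oracle `O`. -/
def MLRandomIn (O : ℕ →. ℕ) (μ : MeasureTheory.Measure Seq) (A : Seq) : Prop :=
  ∀ U : ℕ → Set Seq, MLTestIn O μ U → A ∉ ⋂ i, U i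

/-! By Post's theorem, a class is enumerable from `∅'` exactly when it is `Σ⁰₂`.

Suppose that for every `c` the complexity of `A↾n` is eventually below `n - c`. The set `D n` of all
`X` with `C(X↾n) + c < n` has measure less than `2 ^ (-c)`, uniformly in `n`, and `A` lies in the
limit inferior of the `D n`. The limit inferior is covered by an open set of small measure: having
chosen `⋂ n ∈ [j, t j], D n` for all `j < k`, add `⋂ n ∈ [k, t], D n` for the least `t` such that
the union, together with any later `D n`, keeps its measure below a threshold that increases slowly
with `k`. Such a `t` exists, because passing from `⋂ n ≥ k, D n` to `⋂ n ∈ [k, t], D n` costs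
arbitrarily little measure, and `∅'` finds it, because the condition on `t` is `Π⁰₁`.

Conversely, let `∅'` enumerate an open set `V` with measure at most `2 ^ (-i)`. At length `n`, guess
the part of `V` enumerated with witnesses below `b`, for the largest `b ≤ n` for which the guess has
measure at most `2 ^ (-i)`. For fixed `b` the guess is eventually contained in `V`, hence small; so
a sequence in `V` is eventually captured. For `i = 2 j`, there are at most `2 ^ (n - 2 j)` guessed
strings of length `n`, and such a string is described by its index among them, in `n - 2 j` bits,
together with `j`, in `j + O(1)` bits.
-/

/-! ### Arithmetical predicates -/

section

variable {α β γ : Type} [Primcodable α] [Primcodable β] [Primcodable γ]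

theorem primrec_fst {f : α → β × γ} (hf : Primrec f) : Primrec fun a => (f a).1 :=
  Primrec.fst.comp hf

theorem primrec_snd {f : α → β × γ} (hf : Primrec f) : Primrec fun a => (f a).2 :=
  Primrec.snd.comp hf

theorem primrec_natPair {f g : α → ℕ} (hf : Primrec f) (hg : Primrec g) :
    Primrec fun a => Nat.pair (f a) (g a) :=
  Primrec₂.natPair.comp hf hg

theorem primrec_add {f g : α → ℕ} (hf : Primrec f) (hg : Primrec g) :
    Primrec fun a => f a + g a :=
  Primrec.nat_add.comp hf hg

theorem primrec_cons {f : α → β} {g : α → List β} (hf : Primrec f) (hg : Primrec g) :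
    Primrec fun a => f a :: g a :=
  Primrec.list_cons.comp hf hg

theorem primrec_getD {f : α → List β} {g : α → ℕ} (d : β) (hf : Primrec f) (hg : Primrec g) :
    Primrec fun a => (f a).getD (g a) d :=
  (Primrec.list_getD d).comp hf hg

theorem primrec_mul {f g : α → ℕ} (hf : Primrec f) (hg : Primrec g) :
    Primrec fun a => f a * g a :=
  Primrec.nat_mul.comp hf hg

theorem primrec_two_pow {f : α → ℕ} (hf : Primrec f) : Primrec fun a => 2 ^ f a := by
  have h : Primrec fun n => Nat.rec (motive := fun _ => ℕ) 1 (fun _ m => 2 * m) n :=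
    Primrec.nat_rec₁ _ (Primrec.nat_mul.comp (.const 2) .snd)
  refine (h.comp hf).of_eq fun a => ?_
  induction f a with
  | zero => rfl
  | succ n ih => rw [pow_succ', ← ih]

theorem primrec_take {f : α → List β} {g : α → ℕ} (hf : Primrec f) (hg : Primrec g) :
    Primrec fun a => (f a).take (g a) :=
  Primrec.list_take.comp hg hf

theorem primrec_drop {f : α → List β} {g : α → ℕ} (hf : Primrec f) (hg : Primrec g) :
    Primrec fun a => (f a).drop (g a) :=
  Primrec.list_drop.comp hg hf

theorem primrec_idxOf [BEq β] [LawfulBEq β] {f : α → β} {g : α → List β} (hf : Primrec f)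
    (hg : Primrec g) : Primrec fun a => (g a).idxOf (f a) := by
  convert Primrec.list_idxOf.comp hf hg

theorem primrec_optionGetD {f : α → Option β} {g : α → β} (hf : Primrec f) (hg : Primrec g) :
    Primrec fun a => (f a).getD (g a) :=
  Primrec.option_getD.comp hf hg

end

attribute [local fun_prop] Primrec
attribute [local fun_prop] Primrec.id Primrec.const Primrec.comp Primrec.pair Primrec.encode
  Primrec.decode Primrec.unpair Primrec.list_length primrec_fst primrec_snd primrec_natPair
  primrec_add primrec_mul primrec_two_pow primrec_cons primrec_getD primrec_take primrec_drop
  primrec_optionGetD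

/-- A class of predicates on coded types, such as a level of the arithmetical hierarchy. -/
abbrev PredClass := ∀ (α : Type) [Primcodable α], (α → Prop) → Prop

namespace PredClass

/-- The primitive recursive predicates. -/
def primrec : PredClass := fun _ _ p => PrimrecPred p

/-- The predicates `∃ x, q (a, x)` with `q` in `K`. -/
def proj (K : PredClass) : PredClass := fun α _ p =>
  ∃ q : α × ℕ → Prop, K (α × ℕ) q ∧ ∀ a, p a ↔ ∃ x, q (a, x)

/-- The complements of the predicates in `K`. -/
def compl (K : PredClass) : PredClass := fun α _ p => K α fun a => ¬p a

/-- The closure properties shared by all levels of the arithmetical hierarchy. Having both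
bounded quantifiers among them makes the notion stable under `compl` and `proj`. -/
structure IsClosed (K : PredClass) : Prop where
  of_primrec : ∀ {α : Type} [Primcodable α] {p : α → Prop}, PrimrecPred p → K α p
  and : ∀ {α : Type} [Primcodable α] {p q : α → Prop}, K α p → K α q → K α fun a => p a ∧ q a
  or : ∀ {α : Type} [Primcodable α] {p q : α → Prop}, K α p → K α q → K α fun a => p a ∨ q a
  comp : ∀ {α β : Type} [Primcodable α] [Primcodable β] {p : β → Prop} {f : α → β},
    K β p → Primrec f → K α fun a => p (f a)
  ball : ∀ {α : Type} [Primcodable α] {p : α × ℕ → Prop} {f : α → ℕ},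
    K (α × ℕ) p → Primrec f → K α fun a => ∀ j < f a, p (a, j)
  bex : ∀ {α : Type} [Primcodable α] {p : α × ℕ → Prop} {f : α → ℕ},
    K (α × ℕ) p → Primrec f → K α fun a => ∃ j < f a, p (a, j)

variable {K L : PredClass} {α β : Type} [Primcodable α] [Primcodable β]

theorem isClosed_primrec : primrec.IsClosed where
  of_primrec hp := hp
  and hp hq := PrimrecPred.and hp hq
  or hp hq := PrimrecPred.or hp hq
  comp hp hf := PrimrecPred.comp hp hf
  ball {α _ p _} hp hf := by
    have h : PrimrecRel fun j (a : α) => p (a, j) := PrimrecPred.comp hp (by fun_prop)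
    simpa only [primrec, List.mem_range, id_eq] using
      h.forall_mem_list.comp (Primrec.list_range.comp hf) .id
  bex {α _ p _} hp hf := by
    have h : PrimrecRel fun j (a : α) => p (a, j) := PrimrecPred.comp hp (by fun_prop)
    simpa only [primrec, List.mem_range, id_eq] using
      h.exists_mem_list.comp (Primrec.list_range.comp hf) .id

theorem IsClosed.compl (hK : K.IsClosed) : K.compl.IsClosed where
  of_primrec hp := hK.of_primrec hp.not
  and hp hq := by simpa only [PredClass.compl, not_and_or] using hK.or hp hq
  or hp hq := by simpa only [PredClass.compl, not_or] using hK.and hp hq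
  comp {_ _ _ _ p _} hp hf := hK.comp (p := fun b => ¬p b) hp hf
  ball hp hf := by simpa only [PredClass.compl, not_forall, exists_prop] using hK.bex hp hf
  bex hp hf := by simpa only [PredClass.compl, not_exists, not_and] using hK.ball hp hf

theorem proj_mono (h : ∀ {α : Type} [Primcodable α] {p : α → Prop}, K α p → L α p)
    {p : α → Prop} : K.proj α p → L.proj α p
  | ⟨q, hq, hpq⟩ => ⟨q, h hq, hpq⟩

theorem IsClosed.proj_of (hK : K.IsClosed) {p : α → Prop} (hp : K α p) : K.proj α p :=
  ⟨fun z => p z.1, hK.comp hp .fst, fun a => by simp⟩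

theorem forall_lt_exists_iff_exists_bound {n : ℕ} {q : ℕ → ℕ → Prop} :
    (∀ j < n, ∃ x, q j x) ↔ ∃ s, ∀ j < n, ∃ x < s, q j x := by
  refine ⟨fun h => ?_, fun ⟨s, hs⟩ j hj => (hs j hj).imp fun x hx => hx.2⟩
  choose! x hx using h
  exact ⟨(Finset.range n).sup x + 1, fun j hj =>
    ⟨x j, Nat.lt_succ_of_le (Finset.le_sup (Finset.mem_range.2 hj)), hx j hj⟩⟩

theorem IsClosed.proj (hK : K.IsClosed) : K.proj.IsClosed where
  of_primrec hp := hK.proj_of (hK.of_primrec hp)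
  and := by
    rintro α _ p q ⟨p', hp', hp⟩ ⟨q', hq', hq⟩
    refine ⟨fun z => p' (z.1, z.2.unpair.1) ∧ q' (z.1, z.2.unpair.2),
      hK.and (hK.comp hp' (by fun_prop)) (hK.comp hq' (by fun_prop)), fun a => ?_⟩
    simp only [hp, hq]
    exact ⟨fun ⟨⟨x, hx⟩, y, hy⟩ => ⟨Nat.pair x y, by simpa using ⟨hx, hy⟩⟩,
      fun ⟨x, hx, hy⟩ => ⟨⟨_, hx⟩, _, hy⟩⟩
  or := by
    rintro α _ p q ⟨p', hp', hp⟩ ⟨q', hq', hq⟩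
    exact ⟨fun z => p' z ∨ q' z, hK.or hp' hq', fun a => by simp only [hp, hq, exists_or]⟩
  comp := by
    rintro α β _ _ p f ⟨p', hp', hp⟩ hf
    exact ⟨fun z => p' (f z.1, z.2), hK.comp hp' (by fun_prop), fun a => hp _⟩
  ball := by
    rintro α _ p f ⟨p', hp', hp⟩ hf
    refine ⟨fun z => ∀ j < f z.1, ∃ x < z.2, p' ((z.1, j), x),
      hK.ball (p := fun z : (α × ℕ) × ℕ => ∃ x < z.1.2, p' ((z.1.1, z.2), x))
        (hK.bex (hK.comp hp' (f := fun z : ((α × ℕ) × ℕ) × ℕ => ((z.1.1.1, z.1.2), z.2))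
          (by fun_prop)) (by fun_prop)) (by fun_prop), fun a => ?_⟩
    simp only [hp]
    exact forall_lt_exists_iff_exists_bound
  bex := by
    rintro α _ p f ⟨p', hp', hp⟩ hf
    refine ⟨fun z => ∃ j < f z.1, p' ((z.1, j), z.2),
      hK.bex (hK.comp hp' (f := fun z : (α × ℕ) × ℕ => ((z.1.1, z.2), z.1.2)) (by fun_prop))
        (by fun_prop), fun a => ?_⟩
    simp only [hp]
    exact ⟨fun ⟨j, hj, x, hx⟩ => ⟨x, j, hj, hx⟩, fun ⟨x, j, hj, hx⟩ => ⟨j, hj, x, hx⟩⟩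

theorem IsClosed.exists (hK : K.IsClosed) {p : α × β → Prop} (hp : K.proj (α × β) p) :
    K.proj α fun a => ∃ b, p (a, b) := by
  obtain hβ | ⟨⟨d⟩⟩ := isEmpty_or_nonempty β
  · have hfalse : PrimrecPred fun _ : α => False := ⟨_, .const false⟩
    simpa only [IsEmpty.exists_iff] using hK.proj.of_primrec hfalse
  obtain ⟨q, hq, hpq⟩ := hp
  refine ⟨fun z => q ((z.1, (Encodable.decode (α := β) z.2.unpair.1).getD d), z.2.unpair.2),
    hK.comp hq (by fun_prop), fun a => ?_⟩
  simp only [hpq]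
  exact ⟨fun ⟨b, x, hx⟩ => ⟨Nat.pair (Encodable.encode b) x, by simpa using hx⟩,
    fun ⟨x, hx⟩ => ⟨_, _, hx⟩⟩

end PredClass

/-- The `Σ⁰₁` predicates. -/
def Sigma1 : PredClass := PredClass.primrec.proj

/-- The `Π⁰₁` predicates. -/
def Pi1 : PredClass := Sigma1.compl

/-- The `Σ⁰₂` predicates. -/
def Sigma2 : PredClass := Pi1.proj

section

variable {α β : Type} [Primcodable α] [Primcodable β] {p : α → Prop}

theorem isClosed_sigma1 : Sigma1.IsClosed := PredClass.isClosed_primrec.proj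

theorem isClosed_pi1 : Pi1.IsClosed := isClosed_sigma1.compl

theorem isClosed_sigma2 : Sigma2.IsClosed := isClosed_pi1.proj

theorem sigma1_exists {p : α × β → Prop} (hp : Sigma1 (α × β) p) :
    Sigma1 α fun a => ∃ b, p (a, b) :=
  PredClass.isClosed_primrec.exists hp

theorem sigma2_exists {p : α × β → Prop} (hp : Sigma2 (α × β) p) :
    Sigma2 α fun a => ∃ b, p (a, b) :=
  isClosed_pi1.exists hp

theorem pi1_not (hp : Sigma1 α p) : Pi1 α fun a => ¬p a := by
  simpa only [Pi1, PredClass.compl, not_not] using hp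

theorem pi1_forall {p : α × β → Prop} (hp : Pi1 (α × β) p) : Pi1 α fun a => ∀ b, p (a, b) := by
  simpa only [Pi1, PredClass.compl, not_forall] using sigma1_exists (p := fun z => ¬p z) hp

theorem sigma2_of_pi1 (hp : Pi1 α p) : Sigma2 α p := isClosed_pi1.proj_of hp

theorem sigma2_of_sigma1 (hp : Sigma1 α p) : Sigma2 α p :=
  PredClass.proj_mono isClosed_pi1.of_primrec hp

theorem exists_primrec_of_sigma2 (hp : Sigma2 α p) :
    ∃ r : (α × ℕ) × ℕ → Prop, PrimrecPred r ∧ ∀ a, p a ↔ ∃ w, ∀ y, r ((a, w), y) := by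
  obtain ⟨q, ⟨r, hr, hqr⟩, hpq⟩ := hp
  refine ⟨fun z => ¬r z, hr.not, fun a => (hpq a).trans (exists_congr fun w => ?_)⟩
  exact not_iff_not.1 ((hqr (a, w)).trans not_forall_not.symm)

end

/-! ### Post's theorem -/

section

variable {α β : Type} [Primcodable α] [Primcodable β]

theorem sigma1_graph {f : α →. β} (hf : Partrec f) : Sigma1 (α × β) fun z => z.2 ∈ f z.1 := by
  obtain ⟨c, hc⟩ := Nat.Partrec.Code.exists_code.1 hf
  refine ⟨fun z => Nat.Partrec.Code.evaln z.2 c (Encodable.encode z.1.1) =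
    some (Encodable.encode z.1.2), ?_, fun ⟨a, b⟩ => ?_⟩
  · have hinput : Primrec fun z : (α × β) × ℕ => ((z.2, c), Encodable.encode z.1.1) := by fun_prop
    exact Primrec.eq.comp (Nat.Partrec.Code.primrec_evaln.comp hinput)
      (Primrec.option_some.comp (by fun_prop))
  · have hmem : Encodable.encode b ∈ c.eval (Encodable.encode a) ↔ b ∈ f a := by simp [hc]
    exact hmem.symm.trans Nat.Partrec.Code.evaln_complete

theorem exists_primrec_mem_haltingSet_iff {p : ℕ → Prop} (hp : Sigma1 ℕ p) :
    ∃ s : ℕ → ℕ, Primrec s ∧ ∀ n, s n ∈ haltingSet ↔ p n := by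
  obtain ⟨q, ⟨_, hq⟩, hpq⟩ := hp
  have hsearch : Partrec fun n : ℕ =>
      Nat.rfind fun x => Part.some (decide (q (n.unpair.1, x))) :=
    Partrec.rfind (hq.comp (by fun_prop : Primrec fun z : ℕ × ℕ =>
      (z.1.unpair.1, z.2))).to_comp.partrec
  obtain ⟨c, hc⟩ := Nat.Partrec.Code.exists_code.1 (Partrec.nat_iff.1 hsearch)
  refine ⟨fun n => Encodable.encode (c.curry n),
    Primrec.encode.comp (Nat.Partrec.Code.primrec₂_curry.comp (.const c) .id), fun n => ?_⟩
  rw [haltingSet, Set.mem_ofPred_eq, phi, Denumerable.ofNat_encode,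
    Nat.Partrec.Code.eval_curry, hc, hpq]
  exact Nat.rfind_dom.trans (by simp)

theorem sigma1_haltingSet : Sigma1 ℕ (· ∈ haltingSet) := by
  have h : Partrec fun e : ℕ => phi e e :=
    Nat.Partrec.Code.eval_part.comp (Computable.ofNat _) .id
  simpa only [haltingSet, Set.mem_ofPred_eq, Part.dom_iff_mem] using sigma1_exists (sigma1_graph h)

theorem RecIn.of_partrec {O f : ℕ →. ℕ} (hf : Nat.Partrec f) : RecIn O f := by
  induction hf with
  | zero => exact .zero
  | succ => exact .succ
  | left => exact .left
  | right => exact .right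
  | pair _ _ hf hg => exact .pair hf hg
  | comp _ _ hf hg => exact .comp hf hg
  | prec _ _ hf hg => exact .prec hf hg
  | rfind _ hf => exact .rfind hf

theorem RecIn.of_primrec {O : ℕ →. ℕ} {f : ℕ → ℕ} (hf : Primrec f) : RecIn O f :=
  .of_partrec (Partrec.nat_iff.1 hf.to_comp.partrec)

theorem mem_natRec_bind_iff {σ : Type} {x : Part σ} {g : ℕ → σ → Part σ} {n : ℕ} {m : σ} :
    m ∈ (Nat.rec x (fun y IH => IH.bind (g y)) n : Part σ) ↔
      ∃ F : ℕ → σ, F 0 ∈ x ∧ (∀ j < n, F (j + 1) ∈ g j (F j)) ∧ F n = m := by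
  induction n generalizing m with
  | zero => exact ⟨fun hm => ⟨fun _ => m, hm, by simp, rfl⟩, fun ⟨_, h0, _, hm⟩ => hm ▸ h0⟩
  | succ n ih =>
    simp only [Part.mem_bind_iff, ih]
    constructor
    · rintro ⟨_, ⟨F, h0, hF, rfl⟩, hm⟩
      refine ⟨fun j => if j ≤ n then F j else m, by simpa using h0, fun j hj => ?_, by simp⟩
      rcases Nat.lt_succ_iff_lt_or_eq.1 hj with hj | rfl
      · simpa [Nat.succ_le_of_lt hj, hj.le] using hF j hj
      · simpa using hm
    · rintro ⟨F, h0, hF, rfl⟩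
      exact ⟨F n, ⟨F, h0, fun j hj => hF j (by omega), rfl⟩, hF n (by omega)⟩

theorem exists_fun_iff_exists_list {σ : Type} (d : σ) {n : ℕ} {P : (ℕ → σ) → Prop}
    (hP : ∀ F G, (∀ j ≤ n, F j = G j) → P F → P G) :
    (∃ F, P F) ↔ ∃ l : List σ, P fun j => l.getD j d := by
  refine ⟨fun ⟨F, hF⟩ => ⟨(List.range (n + 1)).map F, hP F _ (fun j hj => ?_) hF⟩,
    fun ⟨l, hl⟩ => ⟨_, hl⟩⟩
  simp [List.getD_eq_getElem?_getD, Nat.lt_succ_of_le hj]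

theorem proj_graph_prec {K : PredClass} (hK : K.IsClosed) {f g : ℕ →. ℕ}
    (hf : K.proj (ℕ × ℕ) fun z => z.2 ∈ f z.1) (hg : K.proj (ℕ × ℕ) fun z => z.2 ∈ g z.1) :
    K.proj (ℕ × ℕ) fun z => z.2 ∈ (Nat.unpaired fun a n => n.rec (f a) fun y IH => do
      let i ← IH; g (Nat.pair a (Nat.pair y i)) : ℕ →. ℕ) z.1 := by
  have hbase : K.proj ((ℕ × ℕ) × List ℕ) fun z => z.2.getD 0 0 ∈ f z.1.1.unpair.1 :=
    hK.proj.comp hf (f := fun z : (ℕ × ℕ) × List ℕ => (z.1.1.unpair.1, z.2.getD 0 0)) (by fun_prop)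
  have hstep : K.proj (((ℕ × ℕ) × List ℕ) × ℕ) fun z => z.1.2.getD (z.2 + 1) 0 ∈
      g (Nat.pair z.1.1.1.unpair.1 (Nat.pair z.2 (z.1.2.getD z.2 0))) :=
    hK.proj.comp hg (f := fun z : ((ℕ × ℕ) × List ℕ) × ℕ =>
      (Nat.pair z.1.1.1.unpair.1 (Nat.pair z.2 (z.1.2.getD z.2 0)), z.1.2.getD (z.2 + 1) 0))
      (by fun_prop)
  have hlast : K.proj ((ℕ × ℕ) × List ℕ) fun z => z.2.getD z.1.1.unpair.2 0 = z.1.2 :=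
    hK.proj.of_primrec (Primrec.eq.comp (by fun_prop) (by fun_prop))
  convert hK.exists (hK.proj.and hbase (hK.proj.and (hK.proj.ball hstep
    (f := fun z => z.1.1.unpair.2) (by fun_prop)) hlast)) using 2 with z
  refine mem_natRec_bind_iff.trans
    (exists_fun_iff_exists_list 0 (n := z.1.unpair.2) fun F G hFG ⟨h0, hF, hm⟩ => ?_)
  refine ⟨hFG 0 (by omega) ▸ h0, fun j hj => ?_, hFG _ le_rfl ▸ hm⟩
  rw [← hFG j hj.le, ← hFG (j + 1) hj]
  exact hF j hj

theorem RecIn.proj_graph {K : PredClass} (hK : K.IsClosed) {O f : ℕ →. ℕ}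
    (hO : K.proj (ℕ × ℕ) fun z => z.2 ∈ O z.1) (hf : RecIn O f) :
    K.proj (ℕ × ℕ) fun z => z.2 ∈ f z.1 := by
  have graph_primrec {f : ℕ → ℕ} (hf : Primrec f) :
      K.proj (ℕ × ℕ) fun z => z.2 ∈ (f : ℕ →. ℕ) z.1 := by
    simpa using hK.proj.of_primrec (Primrec.eq.comp Primrec.snd (hf.comp Primrec.fst))
  induction hf with
  | zero => exact graph_primrec (.const 0)
  | succ => exact graph_primrec .succ
  | left => exact graph_primrec (by fun_prop)
  | right => exact graph_primrec (by fun_prop)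
  | oracle => exact hO
  | @pair f g _ _ hf hg =>
    convert hK.proj.and
      (hK.proj.comp hf (f := fun z : ℕ × ℕ => (z.1, z.2.unpair.1)) (by fun_prop))
      (hK.proj.comp hg (f := fun z : ℕ × ℕ => (z.1, z.2.unpair.2)) (by fun_prop)) using 2 with z
    simp only [Seq.seq, Part.mem_bind_iff, Part.map_eq_map, Part.mem_map_iff,
      exists_exists_and_eq_and]
    exact ⟨fun ⟨a, ha, b, hb, h⟩ => by simpa [← h] using ⟨ha, hb⟩,
      fun ⟨ha, hb⟩ => ⟨_, ha, _, hb, by simp⟩⟩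
  | @comp f g _ _ hf hg =>
    convert hK.exists (hK.proj.and
      (hK.proj.comp hg (f := fun z : (ℕ × ℕ) × ℕ => (z.1.1, z.2)) (by fun_prop))
      (hK.proj.comp hf (f := fun z : (ℕ × ℕ) × ℕ => (z.2, z.1.2)) (by fun_prop))) using 2 with z
    exact Part.mem_bind_iff
  | prec _ _ hf hg => exact proj_graph_prec hK hf hg
  | @rfind f _ hf =>
    have hzero := hK.proj.comp hf (f := fun z : ℕ × ℕ => (Nat.pair z.1 z.2, 0)) (by fun_prop)
    have hpos := hK.exists (hK.proj.and
      (hK.proj.of_primrec (Primrec.eq.comp Primrec.snd (.const 0)).not)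
      (hK.proj.comp hf (f := fun z : ((ℕ × ℕ) × ℕ) × ℕ => (Nat.pair z.1.1.1 z.1.2, z.2))
        (by fun_prop)))
    convert hK.proj.and hzero (hK.proj.ball hpos Primrec.snd) using 2 with z
    exact Nat.mem_rfind.trans (by simp [and_comm])

theorem cePredIn_iff_recIn {O : ℕ →. ℕ} {p : α → Prop} : CEPredIn O p ↔
    RecIn O fun n => Part.assert (∃ a, Encodable.decode (α := α) n = some a ∧ p a)
      fun _ => Part.some 0 := by
  refine iff_of_eq (congrArg (RecIn O) (funext fun n => Part.ext fun m => ?_))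
  cases Encodable.decode (α := α) n <;>
    simp [Part.mem_map_iff, Part.mem_assert_iff, Unique.exists_iff, eq_comm]

theorem sigma2_graph_haltingSet :
    Sigma2 (ℕ × ℕ) fun z => z.2 ∈ oracleOfSet haltingSet z.1 := by
  have hmem : Sigma2 (ℕ × ℕ) fun z => z.1 ∈ haltingSet ∧ z.2 = 1 :=
    isClosed_sigma2.and (isClosed_sigma2.comp (sigma2_of_sigma1 sigma1_haltingSet) .fst)
      (isClosed_sigma2.of_primrec (Primrec.eq.comp .snd (.const 1)))
  have hnot_mem : Sigma2 (ℕ × ℕ) fun z => z.1 ∉ haltingSet ∧ z.2 = 0 :=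
    isClosed_sigma2.and
      (isClosed_sigma2.comp (p := (· ∉ haltingSet)) (sigma2_of_pi1 (pi1_not sigma1_haltingSet))
        .fst)
      (isClosed_sigma2.of_primrec (Primrec.eq.comp .snd (.const 0)))
  convert isClosed_sigma2.or hmem hnot_mem using 2 with z
  by_cases h : z.1 ∈ haltingSet <;> simp [oracleOfSet, h]

theorem RecIn.of_sigma2 {p : ℕ → Prop} (hp : Sigma2 ℕ p) :
    RecIn (oracleOfSet haltingSet) fun n => Part.assert (p n) fun _ => Part.some 0 := by
  obtain ⟨q, hq, hpq⟩ := hp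
  obtain ⟨s, hs, hsq⟩ := exists_primrec_mem_haltingSet_iff
    (isClosed_sigma1.comp (p := fun z => ¬q z) hq Primrec.unpair)
  have hquery : RecIn (oracleOfSet haltingSet) fun n => oracleOfSet haltingSet (s n) := by
    refine (congrArg (RecIn _) (funext fun n => ?_)).mp (RecIn.comp .oracle (.of_primrec hs))
    exact Part.bind_some _ _
  refine (congrArg (RecIn _) (funext fun n => Part.ext fun m => ?_)).mpr
    (RecIn.comp (.of_primrec (Primrec.const 0)) hquery.rfind)
  have hdom : (Nat.rfind fun x => (fun m => decide (m = 0)) <$>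
      oracleOfSet haltingSet (s (Nat.pair n x))).Dom ↔ p n :=
    Nat.rfind_dom.trans (by simp [oracleOfSet, hsq, hpq])
  refine Iff.trans ?_ Part.mem_bind_iff.symm
  simp [Part.mem_assert_iff, ← hdom, Part.dom_iff_mem]

theorem cePredIn_haltingSet_iff {p : α → Prop} :
    CEPredIn (oracleOfSet haltingSet) p ↔ Sigma2 α p := by
  rw [cePredIn_iff_recIn]
  refine ⟨fun h => ?_, fun hp => .of_sigma2 ?_⟩
  · simpa [Part.mem_assert_iff] using isClosed_sigma2.comp
      (RecIn.proj_graph isClosed_pi1 sigma2_graph_haltingSet h)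
      (f := fun a : α => (Encodable.encode a, 0)) (by fun_prop)
  · exact sigma2_exists (isClosed_sigma2.and
      (isClosed_sigma2.of_primrec (Primrec.eq.comp (f := fun z : ℕ × α => Encodable.decode z.1)
        (by fun_prop) (Primrec.option_some.comp .snd)))
      (isClosed_sigma2.comp hp .snd))

end

/-! ### Finite strings and the fair-coin measure -/

/-- The list of all binary strings of length `n`. -/
def strings (n : ℕ) : List Str :=
  Nat.rec [[]] (fun _ l => l.map (List.cons false) ++ l.map (List.cons true)) n

theorem mem_strings {n : ℕ} {x : Str} : x ∈ strings n ↔ x.length = n := by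
  induction n generalizing x with
  | zero => simp [strings]
  | succ n ih =>
    change x ∈ (strings n).map (List.cons false) ++ (strings n).map (List.cons true) ↔ _
    cases x with
    | nil => simp
    | cons a x => cases a <;> simp [ih]

theorem nodup_strings (n : ℕ) : (strings n).Nodup := by
  induction n with
  | zero => simp [strings]
  | succ n ih =>
    refine (ih.map List.cons_injective).append (ih.map List.cons_injective) fun x hx hy => ?_
    obtain ⟨y, -, rfl⟩ := List.mem_map.1 hx
    simp at hy

theorem length_strings (n : ℕ) : (strings n).length = 2 ^ n := by
  induction n with
  | zero => rfl
  | succ n ih =>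
    change ((strings n).map (List.cons false) ++ (strings n).map (List.cons true)).length = _
    simp [ih, pow_succ, mul_two]

theorem primrec_strings : Primrec strings :=
  Primrec.nat_rec₁ _ (Primrec.list_append.comp
    (Primrec.list_map .snd (Primrec.list_cons.comp (.const false) .snd))
    (Primrec.list_map .snd (Primrec.list_cons.comp (.const true) .snd)))

/-- The number of strings of length `n` with property `P`. -/
noncomputable def strCount (P : Str → Prop) (n : ℕ) : ℕ := {x | x.length = n ∧ P x}.ncard

theorem finite_length_eq_and (P : Str → Prop) (n : ℕ) : {x | x.length = n ∧ P x}.Finite :=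
  (List.finite_length_eq Bool n).subset fun _ hx => hx.1

theorem strCount_mono {P Q : Str → Prop} {n : ℕ} (h : ∀ x, x.length = n → P x → Q x) :
    strCount P n ≤ strCount Q n :=
  Set.ncard_le_ncard (fun x hx => ⟨hx.1, h x hx.1 hx.2⟩) (finite_length_eq_and Q n)

theorem strCount_eq_length_filter (P : Str → Prop) [DecidablePred P] (n : ℕ) :
    strCount P n = ((strings n).filter P).length := by
  have h : {x | x.length = n ∧ P x} = ((strings n).filter P).toFinset := by
    ext x
    simp [mem_strings]
  rw [strCount, h, Set.ncard_coe_finset, List.toFinset_card_of_nodup ((nodup_strings n).filter _)]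

theorem ncard_length_eq (n : ℕ) : {x : Str | x.length = n}.ncard = 2 ^ n := by
  simpa [strCount, length_strings] using strCount_eq_length_filter (fun _ => True) n

theorem ncard_length_lt_lt (n : ℕ) : {x : Str | x.length < n}.ncard < 2 ^ n := by
  induction n with
  | zero => simp
  | succ n ih =>
    have h : {x : Str | x.length < n + 1} = {x | x.length < n} ∪ {x | x.length = n} := by
      ext x
      exact Nat.lt_succ_iff_lt_or_eq
    calc {x : Str | x.length < n + 1}.ncard
      _ ≤ {x : Str | x.length < n}.ncard + {x : Str | x.length = n}.ncard :=
        h ▸ Set.ncard_union_le _ _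
      _ < 2 ^ n + 2 ^ n := by rw [ncard_length_eq]; omega
      _ = 2 ^ (n + 1) := by ring

theorem primrec_filter_strings {α : Type} [Primcodable α] {P : α × Str → Prop} [DecidablePred P]
    (hP : PrimrecPred P) :
    Primrec fun z : α × ℕ => (strings z.2).filter fun x => P (z.1, x) := by
  have hR : PrimrecRel fun (x : Str) (a : α) => P (a, x) := PrimrecPred.comp hP (by fun_prop)
  exact hR.listFilter.comp (primrec_strings.comp .snd) .fst

theorem primrec_strCount {α : Type} [Primcodable α] {P : α × Str → Prop} (hP : PrimrecPred P) :
    Primrec fun z : α × ℕ => strCount (fun x => P (z.1, x)) z.2 := by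
  simpa only [strCount_eq_length_filter] using
    Primrec.list_length.comp (primrec_filter_strings hP)

theorem le_strCount_exists_iff {P : Str → ℕ → Prop} {m n : ℕ} :
    m ≤ strCount (fun x => ∃ y, P x y) n ↔ ∃ s, m ≤ strCount (fun x => ∃ y < s, P x y) n := by
  refine ⟨fun h => ?_, fun ⟨s, hs⟩ =>
    hs.trans (strCount_mono fun x _ hx => hx.imp fun y hy => hy.2)⟩
  have hstage (x : Str) : ∃ s, (∃ y, P x y) → ∃ y < s, P x y := by
    by_cases hx : ∃ y, P x y
    · exact ⟨hx.choose + 1, fun _ => ⟨_, Nat.lt_succ_self _, hx.choose_spec⟩⟩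
    · exact ⟨0, fun h => absurd h hx⟩
  choose s hs using hstage
  obtain ⟨b, hb⟩ := ((List.finite_length_eq Bool n).image s).bddAbove
  refine ⟨b, h.trans (strCount_mono fun x hxn hx => ?_)⟩
  obtain ⟨y, hy, hP⟩ := hs x hx
  exact ⟨y, hy.trans_le (hb ⟨x, hxn, rfl⟩), hP⟩

theorem sigma1_le_strCount {α : Type} [Primcodable α] {S : α × Str → Prop}
    (hS : Sigma1 (α × Str) S) :
    Sigma1 ((α × ℕ) × ℕ) fun z => z.2 ≤ strCount (fun x => S (z.1.1, x)) z.1.2 := by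
  obtain ⟨q, hq, hSq⟩ := hS
  have hstage : PrimrecPred fun z : (α × ℕ) × Str => ∃ y < z.1.2, q ((z.1.1, z.2), y) :=
    PredClass.isClosed_primrec.bex (p := fun z : ((α × ℕ) × Str) × ℕ => q ((z.1.1.1, z.1.2), z.2))
      (PrimrecPred.comp hq (by fun_prop)) (by fun_prop)
  refine ⟨fun z => z.1.2 ≤ strCount (fun x => ∃ y < z.2, q ((z.1.1.1, x), y)) z.1.1.2,
    Primrec.nat_le.comp (by fun_prop) ((primrec_strCount hstage).comp
      (by fun_prop : Primrec fun z : ((α × ℕ) × ℕ) × ℕ => ((z.1.1.1, z.2), z.1.1.2))),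
    fun z => ?_⟩
  simp only [hSq]
  exact le_strCount_exists_iff

theorem pi1_strCount_mul_le {α : Type} [Primcodable α] {S : α × Str → Prop} {n b c : α → ℕ}
    (hS : Sigma1 (α × Str) S) (hn : Primrec n) (hb : Primrec b) (hc : Primrec c) :
    Pi1 α fun a => strCount (fun x => S (a, x)) (n a) * b a ≤ c a := by
  have hcount : Pi1 (α × ℕ) fun z => ¬z.2 ≤ strCount (fun x => S (z.1, x)) (n z.1) :=
    pi1_not (isClosed_sigma1.comp (sigma1_le_strCount hS)
      (f := fun z : α × ℕ => ((z.1, n z.1), z.2)) (by fun_prop))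
  have hbound : Pi1 (α × ℕ) fun z => z.2 * b z.1 ≤ c z.1 :=
    isClosed_pi1.of_primrec (Primrec.nat_le.comp (by fun_prop) (by fun_prop))
  refine (congrArg (Pi1 α) (funext fun a => propext ?_)).mp
    (pi1_forall (isClosed_pi1.or hcount hbound))
  simp only [← imp_iff_not_or]
  exact ⟨fun h => h _ le_rfl, fun h m hm => (Nat.mul_le_mul_right _ hm).trans h⟩

@[simp]
theorem length_pre (X : Seq) (n : ℕ) : (pre X n).length = n := by simp [pre]

theorem take_pre (X : Seq) {m n : ℕ} (h : m ≤ n) : (pre X n).take m = pre X m := by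
  refine List.ext_getElem (by simp [h]) fun i _ _ => ?_
  simp [pre]

theorem measurableSet_setOf_pre (P : Str → Prop) (n : ℕ) :
    MeasurableSet {X : Seq | P (pre X n)} :=
  (measurable_pi_lambda (fun (X : Seq) (i : Fin n) => X i) fun _ => measurable_pi_apply _)
    (Set.toFinite {v | P (List.ofFn v)}).measurableSet

theorem measurableSet_cyl (σ : Str) : MeasurableSet (cyl σ) :=
  measurableSet_setOf_pre (· = σ) σ.length

theorem setOf_pre_eq_biUnion_cyl (P : Str → Prop) (n : ℕ) :
    {X : Seq | P (pre X n)} = ⋃ x ∈ {x | x.length = n ∧ P x}, cyl x := by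
  ext X
  simp only [Set.mem_iUnion]
  constructor
  · exact fun hX => ⟨pre X n, ⟨length_pre X n, hX⟩, by simp [cyl]⟩
  · rintro ⟨x, ⟨rfl, hx⟩, hX : pre X x.length = x⟩
    rwa [← hX] at hx

namespace FairCoin

variable {μ : MeasureTheory.Measure Seq}

theorem isProbabilityMeasure (hμ : FairCoin μ) : MeasureTheory.IsProbabilityMeasure μ := by
  refine ⟨?_⟩
  have h : cyl [] = Set.univ := by simp [cyl, pre]
  simpa [h] using hμ []

theorem measure_setOf_pre (hμ : FairCoin μ) (P : Str → Prop) (n : ℕ) :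
    μ {X | P (pre X n)} = strCount P n / 2 ^ n := by
  have hfin := finite_length_eq_and P n
  have hdisj : (hfin.toFinset : Set Str).PairwiseDisjoint cyl := by
    intro x hx y hy hxy
    rw [Set.Finite.coe_toFinset] at hx hy
    refine Set.disjoint_left.2 fun X (hX : pre X _ = x) (hY : pre X _ = y) => hxy ?_
    rw [← hX, ← hY, hx.1, hy.1]
  have hsum := MeasureTheory.measure_biUnion_finset (μ := μ) hdisj fun x _ => measurableSet_cyl x
  rw [setOf_pre_eq_biUnion_cyl, strCount, Set.ncard_eq_toFinset_card _ hfin]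
  simp only [Set.Finite.mem_toFinset] at hsum
  rw [hsum, Finset.sum_congr rfl fun x hx => ?_, Finset.sum_const, nsmul_eq_mul, div_eq_mul_inv]
  rw [hμ x, ((Set.Finite.mem_toFinset hfin).1 hx).1, ENNReal.inv_pow]

theorem measure_setOf_pre_le_div_iff (hμ : FairCoin μ) {P : Str → Prop} {n a b : ℕ}
    (hb : b ≠ 0) : μ {X | P (pre X n)} ≤ a / b ↔ strCount P n * b ≤ a * 2 ^ n := by
  rw [hμ.measure_setOf_pre, ENNReal.div_le_iff (by simp) (by simp), ENNReal.mul_comm_div,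
    ← mul_div_assoc, ENNReal.le_div_iff_mul_le (by simp [hb]) (by simp)]
  norm_cast

theorem measure_setOf_pre_le_inv_two_pow_iff (hμ : FairCoin μ) {P : Str → Prop} {n i : ℕ} :
    μ {X | P (pre X n)} ≤ (2 : ℝ≥0∞)⁻¹ ^ i ↔ strCount P n * 2 ^ i ≤ 2 ^ n := by
  simpa [ENNReal.inv_pow] using hμ.measure_setOf_pre_le_div_iff (P := P) (n := n) (a := 1)
    (b := 2 ^ i) (by simp)

end FairCoin

/-! ### Greedy covers of a limit inferior -/

section

variable {Ω : Type*}

/-- For a list `l` of natural numbers, most recent entry first, the union of the sets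
`⋂ n ∈ [k, t], D n`, where `t` is the entry of `l` that has `k` earlier entries. -/
def cover (D : ℕ → Set Ω) (l : List ℕ) : Set Ω :=
  {X | ∃ t s, t :: s <:+ l ∧ ∀ n < t + 1, s.length ≤ n → X ∈ D n}

variable {D : ℕ → Set Ω} {l l' : List ℕ}

theorem cover_nil : cover D [] = ∅ := by simp [cover]

theorem cover_cons (t : ℕ) :
    cover D (t :: l) = {X | ∀ n < t + 1, l.length ≤ n → X ∈ D n} ∪ cover D l := by
  ext X
  simp only [cover, List.suffix_cons_iff, Set.mem_union, Set.mem_ofPred_eq]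
  constructor
  · rintro ⟨u, s, h | h, hX⟩
    · obtain ⟨rfl, rfl⟩ := List.cons.inj h
      exact .inl hX
    · exact .inr ⟨u, s, h, hX⟩
  · rintro (hX | ⟨u, s, h, hX⟩)
    · exact ⟨t, l, .inl rfl, hX⟩
    · exact ⟨u, s, .inr h, hX⟩

theorem cover_mono (h : l <:+ l') : cover D l ⊆ cover D l' :=
  fun _ ⟨t, s, hs, hX⟩ => ⟨t, s, hs.trans h, hX⟩

theorem mem_cover_of_lt_length {X : Ω} {N : ℕ} (hX : ∀ n, N ≤ n → X ∈ D n) (hN : N < l.length) :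
    X ∈ cover D l := by
  have hlen : (l.drop (l.length - (N + 1))).length = N + 1 := by
    rw [List.length_drop]; omega
  obtain ⟨t, s, hs⟩ := List.exists_cons_of_length_eq_add_one hlen
  refine ⟨t, s, hs ▸ List.drop_suffix _ _, fun n _ hn => hX n ?_⟩
  rw [hs, List.length_cons] at hlen
  omega

theorem cover_congr {Ω' : Type*} {D' : ℕ → Set Ω'} {X : Ω} {X' : Ω'}
    (h : ∀ t ∈ l, ∀ n ≤ t, X ∈ D n ↔ X' ∈ D' n) : X ∈ cover D l ↔ X' ∈ cover D' l := by
  refine exists₂_congr fun t s => and_congr_right fun hs => forall₂_congr fun n hn => ?_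
  rw [h t (hs.subset List.mem_cons_self) n (Nat.lt_succ_iff.1 hn)]

end

section

variable {Ω : Type*} [MeasurableSpace Ω] (μ : MeasureTheory.Measure Ω) (D : ℕ → Set Ω)
  (a : ℕ → ℝ≥0∞)

/-- The measure condition maintained by the greedy construction of a cover: together with any
later `D n`, the cover chosen so far stays within the current threshold. -/
def IsAdmissible (l : List ℕ) : Prop :=
  ∀ n, (∀ s ∈ l, s ≤ n) → μ (D n ∪ cover D l) ≤ a l.length

/-- Each entry of the list is the least one that keeps the list admissible. -/
def IsGreedy (l : List ℕ) : Prop :=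
  ∀ t s, t :: s <:+ l → IsLeast {u | IsAdmissible μ D a (u :: s)} t

/-- The union of the covers given by all greedy lists. -/
def greedyCover : Set Ω := ⋃ l ∈ {l | IsGreedy μ D a l}, cover D l

variable {μ D a} {l l' : List ℕ}

theorem exists_measure_sdiff_lt [MeasureTheory.IsFiniteMeasure μ] {F : ℕ → Set Ω}
    (hF : ∀ t, MeasurableSet (F t)) (hanti : Antitone F) {ε : ℝ≥0∞} (hε : 0 < ε) (m : ℕ) :
    ∃ t, m ≤ t ∧ μ (F t \ ⋂ n, F n) < ε := by
  have hempty : ⋂ t, F t \ ⋂ n, F n = ∅ := by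
    refine Set.eq_empty_of_forall_notMem fun X hX => ?_
    simp only [Set.mem_iInter, Set.mem_sdiff] at hX
    exact (hX 0).2 fun t => (hX t).1
  have hlim := MeasureTheory.tendsto_measure_iInter_atTop (μ := μ)
    (s := fun t => F t \ ⋂ n, F n)
    (fun t => ((hF t).diff (.iInter hF)).nullMeasurableSet)
    (fun s t hst => Set.sdiff_subset_sdiff_left (hanti hst))
    ⟨0, MeasureTheory.measure_ne_top _ _⟩
  rw [hempty, MeasureTheory.measure_empty] at hlim
  exact ((Filter.eventually_ge_atTop m).and (hlim.eventually_lt_const hε)).exists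

theorem IsAdmissible.exists_cons [MeasureTheory.IsFiniteMeasure μ]
    (hD : ∀ n, MeasurableSet (D n)) (ha : StrictMono a) (hl : IsAdmissible μ D a l) :
    ∃ t, IsAdmissible μ D a (t :: l) := by
  let F (t : ℕ) : Set Ω := {X | ∀ n < t + 1, l.length ≤ n → X ∈ D n}
  have hF (t : ℕ) : MeasurableSet (F t) := by
    simp only [F, Set.ofPred_forall]
    exact .iInter fun n => .iInter fun _ => .iInter fun _ => hD n
  have hanti : Antitone F := fun s t hst X hX n hn => hX n (by omega)
  have hgap : 0 < a (l.length + 1) - a l.length := tsub_pos_of_lt (ha (Nat.lt_succ_self _))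
  obtain ⟨t, ht, hsmall⟩ := exists_measure_sdiff_lt (μ := μ) hF hanti hgap l.length
  refine ⟨t, fun n hn => ?_⟩
  obtain ⟨htn, hln⟩ := List.forall_mem_cons.1 hn
  have hsub : D n ∪ cover D (t :: l) ⊆ (D n ∪ cover D l) ∪ (F t \ ⋂ s, F s) := by
    rw [cover_cons]
    rintro X (hX | hX | hX)
    · exact .inl (.inl hX)
    · by_cases hlim : X ∈ ⋂ s, F s
      · exact .inl (.inl (Set.mem_iInter.1 hlim n n n.lt_succ_self (ht.trans htn)))
      · exact .inr ⟨hX, hlim⟩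
    · exact .inl (.inr hX)
  calc μ (D n ∪ cover D (t :: l))
    _ ≤ μ (D n ∪ cover D l) + μ (F t \ ⋂ s, F s) :=
      (MeasureTheory.measure_mono hsub).trans (MeasureTheory.measure_union_le _ _)
    _ ≤ a l.length + (a (l.length + 1) - a l.length) := add_le_add (hl n hln) hsmall.le
    _ = a (t :: l).length := add_tsub_cancel_of_le (ha.monotone (Nat.le_succ _))

theorem isGreedy_nil : IsGreedy μ D a [] := fun t s h => by simp at h

theorem isGreedy_cons {t : ℕ} : IsGreedy μ D a (t :: l) ↔
    IsLeast {u | IsAdmissible μ D a (u :: l)} t ∧ IsGreedy μ D a l := by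
  refine ⟨fun h => ⟨h t l List.suffix_rfl, fun u s hs => h u s (hs.trans (List.suffix_cons t l))⟩,
    fun ⟨ht, hl⟩ u s hs => ?_⟩
  rcases List.suffix_cons_iff.1 hs with hs | hs
  · obtain ⟨rfl, rfl⟩ := List.cons.inj hs
    exact ht
  · exact hl u s hs

theorem IsGreedy.of_suffix (h : l <:+ l') (hl' : IsGreedy μ D a l') : IsGreedy μ D a l :=
  fun t s hs => hl' t s (hs.trans h)

theorem isAdmissible_nil (h0 : ∀ n, μ (D n) ≤ a 0) : IsAdmissible μ D a [] :=
  fun n _ => by simpa [cover_nil] using h0 n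

theorem IsGreedy.isAdmissible (h0 : ∀ n, μ (D n) ≤ a 0) (hl : IsGreedy μ D a l) :
    IsAdmissible μ D a l := by
  cases l with
  | nil => exact isAdmissible_nil h0
  | cons t l => exact (isGreedy_cons.1 hl).1.1

theorem exists_isGreedy_length_eq [MeasureTheory.IsFiniteMeasure μ]
    (hD : ∀ n, MeasurableSet (D n)) (ha : StrictMono a) (h0 : ∀ n, μ (D n) ≤ a 0) (k : ℕ) :
    ∃ l, IsGreedy μ D a l ∧ l.length = k := by
  induction k with
  | zero => exact ⟨[], isGreedy_nil, rfl⟩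
  | succ k ih =>
    obtain ⟨l, hl, rfl⟩ := ih
    have hne : ∃ t, IsAdmissible μ D a (t :: l) := (hl.isAdmissible h0).exists_cons hD ha
    exact ⟨Nat.find hne :: l, isGreedy_cons.2 ⟨⟨Nat.find_spec hne, fun u => Nat.find_min' hne⟩, hl⟩,
      rfl⟩

theorem IsGreedy.eq_of_length_eq (hl : IsGreedy μ D a l) (hl' : IsGreedy μ D a l')
    (h : l.length = l'.length) : l = l' := by
  induction l generalizing l' with
  | nil => exact (List.length_eq_zero_iff.1 h.symm).symm
  | cons t l ih =>
    cases l' with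
    | nil => simp at h
    | cons t' l' =>
      obtain ⟨ht, hl⟩ := isGreedy_cons.1 hl
      obtain ⟨ht', hl'⟩ := isGreedy_cons.1 hl'
      obtain rfl := ih hl hl' (Nat.succ.inj h)
      rw [ht.unique ht']

theorem IsGreedy.suffix_of_length_le (hl : IsGreedy μ D a l) (hl' : IsGreedy μ D a l')
    (h : l.length ≤ l'.length) : l <:+ l' := by
  have hdrop := List.drop_suffix (l'.length - l.length) l'
  rwa [hl.eq_of_length_eq (hl'.of_suffix hdrop) (by rw [List.length_drop]; omega)]

theorem directedOn_cover_isGreedy : DirectedOn (cover D ⁻¹'o (· ⊆ ·)) {l | IsGreedy μ D a l} := by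
  intro l hl l' hl'
  rcases le_total l.length l'.length with h | h
  · exact ⟨l', hl', cover_mono (hl.suffix_of_length_le hl' h), subset_rfl⟩
  · exact ⟨l, hl, subset_rfl, cover_mono (hl'.suffix_of_length_le hl h)⟩

theorem measure_greedyCover_le (h0 : ∀ n, μ (D n) ≤ a 0) {b : ℝ≥0∞} (hab : ∀ k, a k ≤ b) :
    μ (greedyCover μ D a) ≤ b := by
  rw [greedyCover, MeasureTheory.measure_biUnion_eq_iSup (Set.to_countable _)
    directedOn_cover_isGreedy]
  refine iSup₂_le fun l hl => ?_
  obtain ⟨n, hn⟩ := l.toFinset.bddAbove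
  calc μ (cover D l)
    _ ≤ μ (D n ∪ cover D l) := MeasureTheory.measure_mono Set.subset_union_right
    _ ≤ a l.length := hl.isAdmissible h0 n fun s hs => hn (by simpa using hs)
    _ ≤ b := hab _

theorem mem_greedyCover_of_eventually [MeasureTheory.IsFiniteMeasure μ]
    (hD : ∀ n, MeasurableSet (D n)) (ha : StrictMono a) (h0 : ∀ n, μ (D n) ≤ a 0) {X : Ω}
    (hX : ∀ᶠ n in Filter.atTop, X ∈ D n) : X ∈ greedyCover μ D a := by
  obtain ⟨N, hN⟩ := Filter.eventually_atTop.1 hX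
  obtain ⟨l, hl, hlen⟩ := exists_isGreedy_length_eq hD ha h0 (N + 1)
  exact Set.mem_biUnion hl (mem_cover_of_lt_length hN (hlen ▸ N.lt_succ_self))

end

/-! ### Covers enumerated by the halting problem -/

/-- The sequences whose initial segment of length `n` satisfies `P`. -/
def stage (P : Str → Prop) (n : ℕ) : Set Seq := {X | P (pre X n)}

/-- The counterpart of `stage` for strings, which agrees with it on strings of length at least
`n`. -/
def strStage (P : Str → Prop) (n : ℕ) : Set Str := {x | P (x.take n)}

/-- The measure bound for a greedy cover of length `k`, which increases with `k` from `2 ^ (-i - 1)`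
towards `2 ^ (-i)`. -/
noncomputable def threshold (i k : ℕ) : ℝ≥0∞ := (k + 1 : ℕ) / ((k + 2) * 2 ^ i : ℕ)

section

variable {i k : ℕ}

theorem threshold_strictMono (i : ℕ) : StrictMono (threshold i) := by
  refine strictMono_nat_of_lt_succ fun k => ?_
  rw [threshold, threshold, ENNReal.div_lt_iff (by simp) (by simp), ← ENNReal.mul_div_right_comm,
    ENNReal.lt_div_iff_mul_lt (by simp) (by simp)]
  norm_cast
  have h : (k + 1) * (k + 3) < (k + 2) * (k + 2) := by nlinarith
  calc (k + 1) * ((k + 1 + 2) * 2 ^ i)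
    _ = (k + 1) * (k + 3) * 2 ^ i := by ring
    _ < (k + 2) * (k + 2) * 2 ^ i := Nat.mul_lt_mul_of_pos_right h (by positivity)
    _ = (k + 1 + 1) * ((k + 2) * 2 ^ i) := by ring

theorem threshold_zero (i : ℕ) : threshold i 0 = 2⁻¹ ^ (i + 1) := by
  rw [threshold, ← ENNReal.inv_pow, pow_succ']
  push_cast
  simp

theorem threshold_le (i k : ℕ) : threshold i k ≤ 2⁻¹ ^ i := by
  rw [threshold, ← ENNReal.inv_pow, ENNReal.div_le_iff (by simp) (ENNReal.natCast_ne_top _)]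
  push_cast
  rw [mul_left_comm, ENNReal.inv_mul_cancel (by simp) (by simp), mul_one]
  gcongr
  norm_num

theorem measurableSet_stage (P : Str → Prop) (n : ℕ) : MeasurableSet (stage P n) :=
  measurableSet_setOf_pre P n

theorem pre_mem_strStage_iff {P : Str → Prop} {X : Seq} {m n : ℕ} (h : m ≤ n) :
    pre X n ∈ strStage P m ↔ X ∈ stage P m := by
  rw [strStage, Set.mem_ofPred_eq, take_pre X h, stage, Set.mem_ofPred_eq]

theorem pre_mem_cover_strStage_iff {P : Str → Prop} {X : Seq} {l : List ℕ} {n : ℕ}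
    (h : ∀ t ∈ l, t ≤ n) : pre X n ∈ cover (strStage P) l ↔ X ∈ cover (stage P) l :=
  cover_congr fun t ht _ hm => pre_mem_strStage_iff (hm.trans (h t ht))

theorem greedyCover_stage_eq_biUnion_cyl {μ : MeasureTheory.Measure Seq} {P : Str → Prop}
    {a : ℕ → ℝ≥0∞} : greedyCover μ (stage P) a = ⋃ σ ∈ {σ | ∃ l, IsGreedy μ (stage P) a l ∧
      (∀ t ∈ l, t ≤ σ.length) ∧ σ ∈ cover (strStage P) l}, cyl σ := by
  ext X
  simp only [greedyCover, Set.mem_iUnion₂]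
  constructor
  · rintro ⟨l, hl, hX⟩
    obtain ⟨n, hn⟩ := l.toFinset.bddAbove
    have hle : ∀ t ∈ l, t ≤ n := fun t ht => hn (by simpa using ht)
    exact ⟨pre X n, ⟨l, hl, by simpa using hle, (pre_mem_cover_strStage_iff hle).2 hX⟩,
      by simp [cyl]⟩
  · rintro ⟨σ, ⟨l, hl, hle, hσ⟩, hX : pre X σ.length = σ⟩
    rw [← hX, pre_mem_cover_strStage_iff hle] at hσ
    exact ⟨l, hl, hσ⟩

theorem FairCoin.isAdmissible_threshold_iff {μ : MeasureTheory.Measure Seq} (hμ : FairCoin μ)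
    {P : Str → Prop} {l : List ℕ} :
    IsAdmissible μ (stage P) (threshold i) l ↔ ∀ n, (∀ t ∈ l, t ≤ n) →
      strCount (fun x => P x ∨ x ∈ cover (strStage P) l) n * ((l.length + 2) * 2 ^ i) ≤
        (l.length + 1) * 2 ^ n := by
  refine forall₂_congr fun n hn => ?_
  rw [threshold, ← hμ.measure_setOf_pre_le_div_iff (by simp)]
  simp only [pre_mem_cover_strStage_iff hn]
  rfl

theorem cons_suffix_iff {α : Type*} (d : α) {t : α} {s l : List α} :
    t :: s <:+ l ↔ ∃ j < l.length, l.getD j d = t ∧ l.drop (j + 1) = s := by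
  constructor
  · rintro ⟨r, rfl⟩
    exact ⟨r.length, by simp, by simp, by simp [List.drop_append]⟩
  · rintro ⟨j, hj, rfl, rfl⟩
    rw [List.getD_eq_getElem _ _ hj, ← List.drop_eq_getElem_cons hj]
    exact List.drop_suffix j l

namespace PredClass.IsClosed

variable {K : PredClass} {α : Type} [Primcodable α]

theorem forall_mem_le (hK : K.IsClosed) {f : α → List ℕ} {g : α → ℕ} (hf : Primrec f)
    (hg : Primrec g) : K α fun a => ∀ t ∈ f a, t ≤ g a := by
  have hR : PrimrecRel fun t (a : α) => t ≤ g a := Primrec.nat_le.comp .fst (hg.comp .snd)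
  exact hK.of_primrec (hR.forall_mem_list.comp hf .id)

theorem mem_cover_strStage (hK : K.IsClosed) {S : α × Str → Prop} {f : α → List ℕ} {g : α → Str}
    (hS : K (α × Str) S) (hf : Primrec f) (hg : Primrec g) :
    K α fun a => g a ∈ cover (strStage fun x => S (a, x)) (f a) := by
  have hstage : K ((α × ℕ) × ℕ) fun z => ((f z.1.1).drop (z.1.2 + 1)).length ≤ z.2 →
      S (z.1.1, (g z.1.1).take z.2) := by
    simp only [imp_iff_not_or]
    exact hK.or (hK.of_primrec (Primrec.nat_le.comp (by fun_prop) (by fun_prop)).not)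
      (hK.comp hS (by fun_prop))
  have h := hK.bex (hK.ball hstage (f := fun z => (f z.1).getD z.2 0 + 1) (by fun_prop))
    (f := fun a => (f a).length) (by fun_prop)
  refine (congrArg (K α) (funext fun a => propext ?_)).mp h
  simp [cover, cons_suffix_iff 0, strStage]

end PredClass.IsClosed

theorem isLeast_setOf_iff {p : ℕ → Prop} {n : ℕ} :
    IsLeast {m | p m} n ↔ p n ∧ ∀ m < n, ¬p m :=
  and_congr_right fun _ => forall_congr' fun m => by
    rw [Set.mem_ofPred_eq, ← not_lt, imp_not_comm]

namespace FairCoin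

variable {μ : MeasureTheory.Measure Seq} {S : ℕ × Str → Prop}

theorem pi1_isAdmissible (hμ : FairCoin μ) (hS : Sigma1 (ℕ × Str) S) :
    Pi1 (ℕ × List ℕ) fun z => IsAdmissible μ (stage fun x => S (z.1, x)) (threshold z.1) z.2 := by
  have hcover : Sigma1 (((ℕ × List ℕ) × ℕ) × Str) fun w =>
      S (w.1.1.1, w.2) ∨ w.2 ∈ cover (strStage fun x => S (w.1.1.1, x)) w.1.1.2 :=
    isClosed_sigma1.or (isClosed_sigma1.comp hS (by fun_prop))
      (isClosed_sigma1.mem_cover_strStage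
        (S := fun v : (((ℕ × List ℕ) × ℕ) × Str) × Str => S (v.1.1.1.1, v.2))
        (isClosed_sigma1.comp hS (by fun_prop)) (by fun_prop) (by fun_prop))
  have hcount := pi1_strCount_mul_le hcover (n := fun z => z.2)
    (b := fun z => (z.1.2.length + 2) * 2 ^ z.1.1) (c := fun z => (z.1.2.length + 1) * 2 ^ z.2)
    (by fun_prop) (by fun_prop) (by fun_prop)
  have hlate := isClosed_sigma1.forall_mem_le (f := fun z : (ℕ × List ℕ) × ℕ => z.1.2)
    (g := fun z => z.2) (by fun_prop) (by fun_prop)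
  simpa only [hμ.isAdmissible_threshold_iff, ← imp_iff_not_or] using
    pi1_forall (isClosed_pi1.or (pi1_not hlate) hcount)

theorem sigma2_isGreedy (hμ : FairCoin μ) (hS : Sigma1 (ℕ × Str) S) :
    Sigma2 (ℕ × List ℕ) fun z => IsGreedy μ (stage fun x => S (z.1, x)) (threshold z.1) z.2 := by
  have hadm : Pi1 (((ℕ × List ℕ) × ℕ) × ℕ) fun w =>
      IsAdmissible μ (stage fun x => S (w.1.1.1, x)) (threshold w.1.1.1)
        (w.2 :: w.1.1.2.drop (w.1.2 + 1)) :=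
    isClosed_pi1.comp (hμ.pi1_isAdmissible hS)
      (f := fun w : ((ℕ × List ℕ) × ℕ) × ℕ =>
        (w.1.1.1, w.2 :: w.1.1.2.drop (w.1.2 + 1))) (by fun_prop)
  have hleast := isClosed_sigma2.and
    (isClosed_sigma2.comp (sigma2_of_pi1 hadm)
      (f := fun w : (ℕ × List ℕ) × ℕ => (w, w.1.2.getD w.2 0)) (by fun_prop))
    (isClosed_sigma2.ball (p := fun w => ¬_) (sigma2_of_sigma1 hadm)
      (f := fun w => w.1.2.getD w.2 0) (by fun_prop))
  refine (congrArg (Sigma2 _) (funext fun z => propext ?_)).mp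
    (isClosed_sigma2.ball hleast (f := fun z => z.2.length) (by fun_prop))
  simp only [IsGreedy, cons_suffix_iff 0, isLeast_setOf_iff]
  exact ⟨fun h t s ⟨j, hj, ht, hs⟩ => ht ▸ hs ▸ h j hj, fun h j hj => h _ _ ⟨j, hj, rfl, rfl⟩⟩

end FairCoin

/-- A family of sets of strings, the `i`-th of which contains at most the fraction `2 ^ (-i)` of the
strings of each length. -/
def IsCountingTest (S : ℕ × Str → Prop) : Prop :=
  ∀ i n, strCount (fun x => S (i, x)) n * 2 ^ i ≤ 2 ^ n

theorem FairCoin.exists_mlTestIn_haltingSet {μ : MeasureTheory.Measure Seq} (hμ : FairCoin μ)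
    {S : ℕ × Str → Prop} (hS : Sigma1 (ℕ × Str) S) (hcount : IsCountingTest S) :
    ∃ V, MLTestIn (oracleOfSet haltingSet) μ V ∧
      ∀ A, (∀ i, ∀ᶠ n in Filter.atTop, S (i, pre A n)) → A ∈ ⋂ i, V i := by
  let D (i : ℕ) : ℕ → Set Seq := stage fun x => S (i + 1, x)
  have hshift : Sigma1 (ℕ × Str) fun z => S (z.1 + 1, z.2) := isClosed_sigma1.comp hS (by fun_prop)
  have hgreedy : Sigma2 ((ℕ × Str) × List ℕ) fun w => IsGreedy μ (D w.1.1) (threshold w.1.1) w.2 :=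
    isClosed_sigma2.comp (hμ.sigma2_isGreedy hshift)
      (f := fun w : (ℕ × Str) × List ℕ => (w.1.1, w.2)) (by fun_prop)
  have hle : Sigma2 ((ℕ × Str) × List ℕ) fun w => ∀ t ∈ w.2, t ≤ w.1.2.length :=
    isClosed_sigma2.forall_mem_le (by fun_prop) (by fun_prop)
  have hcover : Sigma1 ((ℕ × Str) × List ℕ) fun w =>
      w.1.2 ∈ cover (strStage fun x => S (w.1.1 + 1, x)) w.2 :=
    isClosed_sigma1.mem_cover_strStage
      (S := fun w : ((ℕ × Str) × List ℕ) × Str => S (w.1.1.1 + 1, w.2))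
      (isClosed_sigma1.comp hS (by fun_prop)) (by fun_prop) (by fun_prop)
  have hW := sigma2_exists
    (isClosed_sigma2.and hgreedy (isClosed_sigma2.and hle (sigma2_of_sigma1 hcover)))
  have := hμ.isProbabilityMeasure
  have h0 (i n : ℕ) : μ (D i n) ≤ threshold i 0 :=
    threshold_zero i ▸ hμ.measure_setOf_pre_le_inv_two_pow_iff.2 (hcount (i + 1) n)
  exact ⟨fun i => greedyCover μ (D i) (threshold i), ⟨{z | _},
    cePredIn_haltingSet_iff.2 hW, fun i => greedyCover_stage_eq_biUnion_cyl,
    fun i => measure_greedyCover_le (h0 i) (threshold_le i)⟩,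
    fun A hA => Set.mem_iInter.2 fun i => mem_greedyCover_of_eventually
      (fun n => measurableSet_stage _ n) (threshold_strictMono i) (h0 i) (hA (i + 1))⟩

end

/-! ### Approximating tests relative to the halting problem -/

section

/-- The string `x` has a prefix `σ` of length below `b` for which, as far as tests of length below
`|x|` can tell, some `w < b` satisfies `∀ y, R σ w y`. -/
def Guess (R : Str → ℕ → ℕ → Prop) (b : ℕ) (x : Str) : Prop :=
  ∃ m < b, ∃ w < b, ∀ y < x.length, R (x.take m) w y

/-- The string `x` satisfies one of the predicates `Guess R b` for which at most the fraction
`2 ^ (-i)` of the strings of the length of `x` do so. -/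
def SmallGuess (R : Str → ℕ → ℕ → Prop) (i : ℕ) (x : Str) : Prop :=
  ∃ b < x.length + 1, Guess R b x ∧ strCount (Guess R b) x.length * 2 ^ i ≤ 2 ^ x.length

variable {R : Str → ℕ → ℕ → Prop} {b b' i : ℕ}

theorem Guess.mono (h : b ≤ b') {x : Str} : Guess R b x → Guess R b' x
  | ⟨m, hm, w, hw, hR⟩ => ⟨m, hm.trans_le h, w, hw.trans_le h, hR⟩

theorem strCount_smallGuess_mul_le (R : Str → ℕ → ℕ → Prop) (i n : ℕ) :
    strCount (SmallGuess R i) n * 2 ^ i ≤ 2 ^ n := by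
  let small (b : ℕ) : Prop := strCount (Guess R b) n * 2 ^ i ≤ 2 ^ n
  have hzero : small 0 := by simp [small, strCount, Guess]
  refine le_trans ?_ (Nat.findGreatest_spec (P := small) n.zero_le hzero)
  refine Nat.mul_le_mul_right _ (strCount_mono ?_)
  rintro x rfl ⟨b, hb, hx, hsmall⟩
  exact hx.mono (Nat.le_findGreatest (Nat.le_of_lt_succ hb) hsmall)

theorem isCountingTest_smallGuess (R : ℕ → Str → ℕ → ℕ → Prop) :
    IsCountingTest fun z => SmallGuess (R z.1) z.1 z.2 :=
  fun i n => strCount_smallGuess_mul_le (R i) i n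

theorem eventually_guess_subset (R : Str → ℕ → ℕ → Prop) (b : ℕ) :
    ∀ᶠ n in Filter.atTop,
      {X | Guess R b (pre X n)} ⊆ ⋃ σ ∈ {σ | ∃ w, ∀ y, R σ w y}, cyl σ := by
  have hrefute (σ : Str) (w : ℕ) :
      ∀ᶠ n in Filter.atTop, (∀ y < n, R σ w y) → ∀ y, R σ w y := by
    by_cases h : ∀ y, R σ w y
    · exact .of_forall fun _ _ => h
    · obtain ⟨y, hy⟩ := not_forall.1 h
      filter_upwards [Filter.eventually_gt_atTop y] with n hn hR using absurd (hR y hn) hy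
  have hall : ∀ᶠ n in Filter.atTop, ∀ σ ∈ {σ : Str | σ.length < b}, ∀ w ∈ Set.Iio b,
      (∀ y < n, R σ w y) → ∀ y, R σ w y :=
    (Filter.eventually_all_finite (List.finite_length_lt Bool b)).2 fun σ _ =>
      (Filter.eventually_all_finite (Set.finite_Iio b)).2 fun w _ => hrefute σ w
  filter_upwards [hall, Filter.eventually_ge_atTop b] with n hn hbn
  rintro X ⟨m, hm, w, hw, hR⟩
  rw [length_pre, take_pre X (hm.le.trans hbn)] at hR
  exact Set.mem_biUnion ⟨w, hn (pre X m) (by simpa using hm) w hw hR⟩ (by simp [cyl])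

theorem eventually_guess_pre {X : Seq}
    (hX : X ∈ ⋃ σ ∈ {σ | ∃ w, ∀ y, R σ w y}, cyl σ) :
    ∃ b, ∀ᶠ n in Filter.atTop, Guess R b (pre X n) := by
  obtain ⟨σ, ⟨w, hR⟩, hσ : pre X σ.length = σ⟩ := Set.mem_iUnion₂.1 hX
  refine ⟨max σ.length w + 1, ?_⟩
  filter_upwards [Filter.eventually_ge_atTop σ.length] with n hn
  refine ⟨σ.length, by omega, w, by omega, fun y _ => ?_⟩
  rw [take_pre X hn, hσ]
  exact hR y

theorem FairCoin.eventually_smallGuess {μ : MeasureTheory.Measure Seq} (hμ : FairCoin μ) {X : Seq}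
    (hR : μ (⋃ σ ∈ {σ | ∃ w, ∀ y, R σ w y}, cyl σ) ≤ 2⁻¹ ^ i)
    (hX : X ∈ ⋃ σ ∈ {σ | ∃ w, ∀ y, R σ w y}, cyl σ) :
    ∀ᶠ n in Filter.atTop, SmallGuess R i (pre X n) := by
  obtain ⟨b, hb⟩ := eventually_guess_pre hX
  filter_upwards [hb, eventually_guess_subset R b, Filter.eventually_ge_atTop b]
    with n hguess hsub hbn
  refine ⟨b, by simpa using Nat.lt_succ_of_le hbn, hguess, ?_⟩
  rw [length_pre, ← hμ.measure_setOf_pre_le_inv_two_pow_iff]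
  exact (MeasureTheory.measure_mono hsub).trans hR

theorem primrecPred_smallGuess {r : ((ℕ × Str) × ℕ) × ℕ → Prop} (hr : PrimrecPred r) :
    PrimrecPred fun z : ℕ × Str => SmallGuess (fun σ w y => r (((z.1, σ), w), y)) z.1 z.2 := by
  have hK := PredClass.isClosed_primrec
  have hguess : PrimrecPred fun v : (ℕ × ℕ) × Str =>
      Guess (fun σ w y => r (((v.1.1, σ), w), y)) v.1.2 v.2 :=
    hK.bex (p := fun v : ((ℕ × ℕ) × Str) × ℕ => ∃ w < v.1.1.2, ∀ y < v.1.2.length,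
        r (((v.1.1.1, v.1.2.take v.2), w), y))
      (hK.bex (p := fun v : (((ℕ × ℕ) × Str) × ℕ) × ℕ => ∀ y < v.1.1.2.length,
          r (((v.1.1.1.1, v.1.1.2.take v.1.2), v.2), y))
        (hK.ball (f := fun v => v.1.1.2.length) (hK.comp hr
          (f := fun v : ((((ℕ × ℕ) × Str) × ℕ) × ℕ) × ℕ =>
            (((v.1.1.1.1.1, v.1.1.1.2.take v.1.1.2), v.1.2), v.2))
          (by fun_prop)) (by fun_prop)) (by fun_prop)) (by fun_prop)
  have hcount : Primrec fun w : (ℕ × Str) × ℕ =>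
      strCount (Guess (fun σ v y => r (((w.1.1, σ), v), y)) w.2) w.1.2.length :=
    (primrec_strCount hguess).comp
      (by fun_prop : Primrec fun w : (ℕ × Str) × ℕ => ((w.1.1, w.2), w.1.2.length))
  have hsmall : PrimrecPred fun w : (ℕ × Str) × ℕ => strCount (Guess
      (fun σ v y => r (((w.1.1, σ), v), y)) w.2) w.1.2.length * 2 ^ w.1.1 ≤ 2 ^ w.1.2.length :=
    Primrec.nat_le.comp (by fun_prop) (by fun_prop)
  exact hK.bex (hK.and (hK.comp hguess
    (f := fun w : (ℕ × Str) × ℕ => ((w.1.1, w.2), w.1.2)) (by fun_prop)) hsmall)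
    (by fun_prop)

theorem FairCoin.exists_countingTest {μ : MeasureTheory.Measure Seq} (hμ : FairCoin μ)
    {V : ℕ → Set Seq} (hV : MLTestIn (oracleOfSet haltingSet) μ V) :
    ∃ S, PrimrecPred S ∧ IsCountingTest S ∧
      ∀ X ∈ ⋂ i, V i, ∀ i, ∀ᶠ n in Filter.atTop, S (i, pre X n) := by
  obtain ⟨W, hW, hVW, hVμ⟩ := hV
  obtain ⟨r, hr, hWr⟩ := exists_primrec_of_sigma2 (cePredIn_haltingSet_iff.1 hW)
  have hV (i : ℕ) : V i = ⋃ σ ∈ {σ | ∃ w, ∀ y, r (((i, σ), w), y)}, cyl σ := by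
    simpa only [hWr] using hVW i
  refine ⟨fun z => SmallGuess (fun σ w y => r (((z.1, σ), w), y)) z.1 z.2,
    primrecPred_smallGuess hr, isCountingTest_smallGuess fun i σ w y => r (((i, σ), w), y),
    fun X hX i => ?_⟩
  have hXi : X ∈ V i := Set.mem_iInter.1 hX i
  have hμi := hVμ i
  rw [hV i] at hXi hμi
  exact hμ.eventually_smallGuess hμi hXi

end

/-! ### Complexity and counting tests -/

section

theorem cplx_lt_iff {M : Str →. Str} {x : Str} {m : ℕ∞} :
    Cplx M x < m ↔ ∃ σ, x ∈ M σ ∧ (σ.length : ℕ∞) < m := by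
  simp [Cplx, sInf_lt_iff]

theorem cplx_le_of_mem {M : Str →. Str} {x σ : Str} (h : x ∈ M σ) : Cplx M x ≤ σ.length :=
  sInf_le ⟨σ, h, rfl⟩

theorem cplx_add_lt_iff {M : Str →. Str} {x : Str} {c n : ℕ} :
    Cplx M x + c < n ↔ ∃ σ, x ∈ M σ ∧ σ.length + c < n := by
  rw [← lt_tsub_iff_right, cplx_lt_iff]
  refine exists_congr fun σ => and_congr_right fun _ => ?_
  rw [lt_tsub_iff_right]
  norm_cast

theorem sigma1_cplx_add_lt {M : Str →. Str} (hM : IsMachine M) :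
    Sigma1 (ℕ × Str) fun z => Cplx M z.2 + z.1 < z.2.length := by
  have hgraph : Sigma1 ((ℕ × Str) × Str) fun w => w.1.2 ∈ M w.2 :=
    isClosed_sigma1.comp (sigma1_graph hM)
      (f := fun w : (ℕ × Str) × Str => (w.2, w.1.2)) (by fun_prop)
  have hlen : Sigma1 ((ℕ × Str) × Str) fun w => w.2.length + w.1.1 < w.1.2.length :=
    isClosed_sigma1.of_primrec (Primrec.nat_lt.comp (by fun_prop) (by fun_prop))
  simpa only [cplx_add_lt_iff] using sigma1_exists (isClosed_sigma1.and hgraph hlen)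

theorem strCount_cplx_add_lt_lt (M : Str →. Str) (c n : ℕ) :
    strCount (fun x => Cplx M x + c < x.length) n < 2 ^ (n - c) := by
  have hprogram : ∀ x ∈ {x : Str | x.length = n ∧ Cplx M x + c < x.length},
      ∃ σ, x ∈ M σ ∧ σ.length < n - c := by
    rintro x ⟨rfl, hx⟩
    obtain ⟨σ, hσ, hlen⟩ := cplx_add_lt_iff.1 hx
    exact ⟨σ, hσ, by omega⟩
  choose! program hmem hlen using hprogram
  have hinj : Set.InjOn program {x : Str | x.length = n ∧ Cplx M x + c < x.length} :=
    fun x hx y hy hxy => Part.mem_unique (hmem x hx) (hxy ▸ hmem y hy)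
  exact (Set.ncard_le_ncard_of_injOn program hlen hinj (List.finite_length_lt Bool _)).trans_lt
    (ncard_length_lt_lt (n - c))

theorem isCountingTest_cplx_add_lt (M : Str →. Str) :
    IsCountingTest fun z => Cplx M z.2 + z.1 < z.2.length := by
  intro c n
  have hcount := strCount_cplx_add_lt_lt M c n
  rcases le_or_gt c n with hcn | hnc
  · calc strCount (fun x => Cplx M x + c < x.length) n * 2 ^ c
      _ ≤ 2 ^ (n - c) * 2 ^ c := Nat.mul_le_mul_right _ hcount.le
      _ = 2 ^ n := by rw [← pow_add, Nat.sub_add_cancel hcn]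
  · rw [Nat.sub_eq_zero_of_le hnc.le, pow_zero, Nat.lt_one_iff] at hcount
    simp [hcount]

theorem UniversalMachine.exists_cplx_le {U : Str →. Str} (hU : UniversalMachine U)
    {f : ℕ × Str →. Str} (hf : Partrec f) :
    ∃ d : ℕ, ∀ j τ x, x ∈ f (j, τ) → Cplx U x ≤ (τ.length + j + d : ℕ) := by
  -- The machine reads the input `1 ^ j 0 τ` as the pair `(j, τ)`.
  let parse (σ : Str) : ℕ × Str := (σ.idxOf false, σ.drop (σ.idxOf false + 1))
  have hidx : Primrec fun σ : Str => σ.idxOf false := primrec_idxOf (.const false) .id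
  have hparse : Primrec parse := by fun_prop
  obtain ⟨d, hd⟩ := hU.2 (fun σ => f (parse σ)) (hf.comp hparse.to_comp)
  refine ⟨d + 1, fun j τ x hx => ?_⟩
  let σ : Str := List.replicate j true ++ false :: τ
  have hσ : parse σ = (j, τ) := by
    have hidxσ : σ.idxOf false = j := by
      simp [σ, List.idxOf_append_of_notMem (a := false) (l₁ := List.replicate j true)]
    simp only [parse, hidxσ]
    simp [σ, List.drop_append]
  calc Cplx U x
    _ ≤ Cplx (fun σ => f (parse σ)) x + d := hd x
    _ ≤ σ.length + d := by
      gcongr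
      exact cplx_le_of_mem (hσ ▸ hx)
    _ = (τ.length + j + (d + 1) : ℕ) := by
      simp only [σ, List.length_append, List.length_replicate, List.length_cons]
      norm_cast
      omega

variable {S : ℕ × Str → Prop}

theorem IsCountingTest.le_length (hS : IsCountingTest S) {i : ℕ} {x : Str} (hx : S (i, x)) :
    i ≤ x.length := by
  have hpos : 0 < strCount (fun x => S (i, x)) x.length :=
    (Set.ncard_pos (finite_length_eq_and _ _)).2 ⟨x, rfl, hx⟩
  exact (Nat.pow_le_pow_iff_right Nat.one_lt_two).1
    ((Nat.le_mul_of_pos_left _ hpos).trans (hS i x.length))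

/-- The decoding of a string `τ` as the index of an element of the `2 j`-th component of `S` of
length `|τ| + 2 j`. -/
noncomputable def decodeIndex (S : ℕ × Str → Prop) (z : ℕ × Str) : Option Str :=
  ((strings (z.2.length + 2 * z.1)).filter fun x => S (2 * z.1, x))[(strings z.2.length).idxOf z.2]?

theorem primrec_decodeIndex (hS : PrimrecPred S) : Primrec (decodeIndex S) := by
  have hR : PrimrecPred fun w : ℕ × Str => S (2 * w.1, w.2) := PrimrecPred.comp hS (by fun_prop)
  exact Primrec.list_getElem?.comp ((primrec_filter_strings hR).comp
      (by fun_prop : Primrec fun z : ℕ × Str => (z.1, z.2.length + 2 * z.1)))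
    (primrec_idxOf .snd
      (primrec_strings.comp (by fun_prop : Primrec fun z : ℕ × Str => z.2.length)))

theorem IsCountingTest.exists_decodeIndex_eq (hS : IsCountingTest S) {j : ℕ} {x : Str}
    (hx : S (2 * j, x)) : ∃ τ, τ.length + 2 * j = x.length ∧ decodeIndex S (j, τ) = some x := by
  have hj := hS.le_length hx
  set l := (strings x.length).filter fun y => S (2 * j, y) with hl
  have hxl : x ∈ l := by simpa [hl, mem_strings] using hx
  have hindex : l.idxOf x < (strings (x.length - 2 * j)).length := by
    refine (List.idxOf_lt_length_iff.2 hxl).trans_le ?_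
    rw [hl, ← strCount_eq_length_filter (fun y => S (2 * j, y)), length_strings]
    refine Nat.le_of_mul_le_mul_right ?_ (Nat.two_pow_pos (2 * j))
    rw [← pow_add, Nat.sub_add_cancel hj]
    exact hS (2 * j) x.length
  let τ := (strings (x.length - 2 * j))[l.idxOf x]
  have hτ : τ.length = x.length - 2 * j := mem_strings.1 (List.getElem_mem _)
  have hτx : (strings (x.length - 2 * j)).idxOf τ = l.idxOf x :=
    (nodup_strings _).idxOf_getElem _ _
  refine ⟨τ, by omega, ?_⟩
  rw [decodeIndex, hτ, hτx, Nat.sub_add_cancel hj, ← hl]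
  exact List.getElem?_idxOf hxl

theorem UniversalMachine.exists_cplx_add_lt {U : Str →. Str} (hU : UniversalMachine U)
    (hS : PrimrecPred S) (hcount : IsCountingTest S) (c : ℕ) :
    ∃ i, ∀ x, S (i, x) → Cplx U x + c < x.length := by
  obtain ⟨d, hd⟩ := hU.exists_cplx_le (f := fun z => decodeIndex S z)
    (primrec_decodeIndex hS).to_comp.ofOption
  let j := c + d + 1
  refine ⟨2 * j, fun x hx => ?_⟩
  obtain ⟨τ, hτ, hdecode⟩ := hcount.exists_decodeIndex_eq hx
  calc Cplx U x + c
    _ ≤ (τ.length + j + d : ℕ) + c := by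
      gcongr
      exact hd j τ x (by simp [hdecode])
    _ < x.length := by
      norm_cast
      omega

end

/-- **Plain-complexity characterization of 2-randomness** (Nies–Stephan–Terwijn;
Miller): `A` is 2-random (Martin-Löf random relative to `∅'`) if and only if there is
a `c` such that `C(A↾n) ≥ n - c` (stated as `n ≤ C(A↾n) + c`) for infinitely many `n`. -/
theorem two_random_iff_io_incompressible (μ : MeasureTheory.Measure Seq)
    (hμ : FairCoin μ) (U : Str →. Str) (hU : UniversalMachine U) (A : Seq) :
    MLRandomIn (oracleOfSet haltingSet) μ A ↔
      ∃ c : ℕ, ∀ m : ℕ, ∃ n : ℕ, m ≤ n ∧ (n : ℕ∞) ≤ Cplx U (pre A n) + c := by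
  constructor
  · intro hrandom
    by_contra! hcompressible
    obtain ⟨V, hV, hcovers⟩ :=
      hμ.exists_mlTestIn_haltingSet (sigma1_cplx_add_lt hU.1) (isCountingTest_cplx_add_lt U)
    refine hrandom V hV (hcovers A fun c => ?_)
    obtain ⟨m, hm⟩ := hcompressible c
    exact Filter.eventually_atTop.2 ⟨m, by simpa using hm⟩
  · rintro ⟨c, hincompressible⟩ V hV hA
    obtain ⟨S, hSprim, hScount, hScaptures⟩ := hμ.exists_countingTest hV
    obtain ⟨i, hi⟩ := hU.exists_cplx_add_lt hSprim hScount c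
    obtain ⟨m, hm⟩ := Filter.eventually_atTop.1 (hScaptures A hA i)
    obtain ⟨n, hmn, hn⟩ := hincompressible m
    exact (hi (pre A n) (hm n hmn)).not_ge (by simpa using hn)

end AR
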